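/- An informationally complete observable is not broadcastable: let n ≥ 2 and let A be an informationally complete observable on ℂ^n. Then there is no broadcasting channel Λ with Λ*(A(x) ⊗ 1) = A(x) = Λ*(1 ⊗ A(x)) for every outcome x. -/

import Mathlib

open Matrix
open scoped Kronecker ComplexOrder

noncomputable section

abbrev Mat (n : ℕ) : Type := Matrix (Fin n) (Fin n) ℂ

/-- An observable is informationally complete if its outcome statistics separate
density matrices. -/
def InfoComplete {n : ℕ} {ΩA : Type} [Fintype ΩA] (A : ΩA → Mat n) : Prop :=
  ∀ ρ σ : Mat n, ρ.PosSemidef → ρ.trace = 1 → σ.PosSemidef → σ.trace = 1 →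
    (∀ x, (ρ * A x).trace = (σ * A x).trace) → ρ = σ

/-!
Suppose the first marginal of a channel, `ρ ↦ Tr₂ Λ(ρ)`, preserves the statistics of an
informationally complete observable. It then maps every state to itself, so `Λ*(X ⊗ 1) = X` for
every `X`, and not only for the effects of the observable. Hence every `X ⊗ 1` lies in the
multiplicative domain of `Λ*`, i.e. `(X ⊗ 1) K i = K i X`, so `Λ*(1 ⊗ Y)` commutes with every `X`:
the second marginal carries no information about the input, whereas an informationally complete
observable on a nontrivial system cannot consist of scalars.
-/

section

variable {Ω ι κ τ : Type*}

section States

open scoped MatrixOrder Matrix.Norms.L2Operator in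
theorem span_posSemidef_eq_top [Finite ι] :
    Submodule.span ℂ {P : Matrix ι ι ℂ | P.PosSemidef} = ⊤ := by
  classical
  have := Fintype.ofFinite ι
  simpa only [nonneg_iff_posSemidef] using CStarAlgebra.span_nonneg (A := Matrix ι ι ℂ)

variable [Fintype ι]

/-- Informational completeness for an arbitrary family of matrices of any size: the trace pairings
with the family separate density matrices. -/
def SeparatesStates (A : Ω → Matrix ι ι ℂ) : Prop :=
  Set.InjOn (fun (ρ : Matrix ι ι ℂ) x => (ρ * A x).trace) {ρ | ρ.PosSemidef ∧ ρ.trace = 1}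

theorem InfoComplete.separatesStates {n : ℕ} {ΩA : Type} [Fintype ΩA] {A : ΩA → Mat n}
    (hA : InfoComplete A) : SeparatesStates A :=
  fun ρ hρ σ hσ h => hA ρ σ hρ.1 hρ.2 hσ.1 hσ.2 (congrFun h)

theorem SeparatesStates.eq_of_posSemidef {A : Ω → Matrix ι ι ℂ} (hA : SeparatesStates A)
    {P Q : Matrix ι ι ℂ} (hP : P.PosSemidef) (hQ : Q.PosSemidef) (htr : P.trace = Q.trace)
    (h : ∀ x, (P * A x).trace = (Q * A x).trace) : P = Q := by
  rcases eq_or_ne Q.trace 0 with hQ0 | hQ0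
  · rw [hP.trace_eq_zero_iff.1 (htr.trans hQ0), hQ.trace_eq_zero_iff.1 hQ0]
  have hinv : 0 ≤ Q.trace⁻¹ := inv_nonneg.2 hQ.trace_nonneg
  have hnormalized : Q.trace⁻¹ • P = Q.trace⁻¹ • Q := by
    refine hA ⟨hP.smul hinv, ?_⟩ ⟨hQ.smul hinv, ?_⟩ (funext fun x => ?_)
    · rw [trace_smul, htr, smul_eq_mul, inv_mul_cancel₀ hQ0]
    · rw [trace_smul, smul_eq_mul, inv_mul_cancel₀ hQ0]
    · simp only [smul_mul, trace_smul, h]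
  exact smul_right_injective _ (inv_ne_zero hQ0) hnormalized

theorem SeparatesStates.exists_notMem_range_scalar [DecidableEq ι] [Nontrivial ι]
    {A : Ω → Matrix ι ι ℂ} (hA : SeparatesStates A) : ∃ x, A x ∉ Set.range (scalar ι) := by
  by_contra! hscalar
  choose c hc using hscalar
  let basisState (i : ι) : Matrix ι ι ℂ := diagonal (Pi.single i 1)
  have hpos (i : ι) : (basisState i).PosSemidef :=
    PosSemidef.diagonal (Pi.single_nonneg.2 zero_le_one)
  have htrace (i : ι) : (basisState i).trace = 1 := by simp [basisState]
  have hpairing (i : ι) (x : Ω) : (basisState i * A x).trace = c x := by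
    simp [basisState, ← hc, ← Finset.sum_mul]
  obtain ⟨i, j, hij⟩ := exists_pair_ne ι
  have heq : basisState i = basisState j :=
    hA.eq_of_posSemidef (hpos i) (hpos j) (by rw [htrace, htrace])
      fun x => by rw [hpairing, hpairing]
  have hentry := congrFun (diagonal_injective heq) i
  simp [hij] at hentry

theorem ext_of_trace_posSemidef_mul {X Y : Matrix ι ι ℂ}
    (h : ∀ P : Matrix ι ι ℂ, P.PosSemidef → (P * X).trace = (P * Y).trace) : X = Y := by
  classical
  let pairing (Z : Matrix ι ι ℂ) := traceLinearMap ι ℂ ℂ ∘ₗ LinearMap.mulRight ℂ Z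
  have hpairing : pairing X = pairing Y := LinearMap.ext_on span_posSemidef_eq_top h
  exact ext_iff_trace_mul_left.2 (LinearMap.congr_fun hpairing)

end States

section KrausOperators

variable [Fintype τ] [Fintype κ]

/-- The Heisenberg dual `X ↦ ∑ i, (K i)ᴴ X K i` of the map with Kraus operators `K`. -/
def krausDual (K : τ → Matrix κ ι ℂ) (X : Matrix κ κ ℂ) : Matrix ι ι ℂ :=
  ∑ i, (K i)ᴴ * X * K i

theorem conjTranspose_krausDual (K : τ → Matrix κ ι ℂ) (X : Matrix κ κ ℂ) :
    (krausDual K X)ᴴ = krausDual K Xᴴ := by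
  simp only [krausDual, conjTranspose_sum, conjTranspose_mul, conjTranspose_conjTranspose,
    Matrix.mul_assoc]

theorem krausDual_one [DecidableEq ι] [DecidableEq κ] {K : τ → Matrix κ ι ℂ}
    (hK : ∑ i, (K i)ᴴ * K i = 1) : krausDual K 1 = 1 := by
  simpa only [krausDual, Matrix.mul_one] using hK

variable [Fintype ι]

/-- The completely positive map `ρ ↦ ∑ i, K i ρ (K i)ᴴ` with Kraus operators `K`: a channel in the
Schrödinger picture when `∑ i, (K i)ᴴ * K i = 1`. -/
def krausMap (K : τ → Matrix κ ι ℂ) (ρ : Matrix ι ι ℂ) : Matrix κ κ ℂ :=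
  ∑ i, K i * ρ * (K i)ᴴ

omit [Fintype κ] in
theorem posSemidef_krausMap [Finite κ] (K : τ → Matrix κ ι ℂ) {ρ : Matrix ι ι ℂ}
    (hρ : ρ.PosSemidef) : (krausMap K ρ).PosSemidef :=
  posSemidef_sum _ fun i _ => hρ.mul_mul_conjTranspose_same (K i)

theorem trace_krausMap_mul (K : τ → Matrix κ ι ℂ) (ρ : Matrix ι ι ℂ) (X : Matrix κ κ ℂ) :
    (krausMap K ρ * X).trace = (ρ * krausDual K X).trace := by
  simp only [krausMap, krausDual, Matrix.sum_mul, Matrix.mul_sum, trace_sum]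
  refine Finset.sum_congr rfl fun i _ => ?_
  rw [Matrix.mul_assoc, trace_mul_comm, ← Matrix.mul_assoc, trace_mul_comm]

theorem krausDual_mul_of_intertwines {K : τ → Matrix κ ι ℂ} {W : Matrix κ κ ℂ} {X : Matrix ι ι ℂ}
    (h : ∀ i, W * K i = K i * X) (Z : Matrix κ κ ℂ) :
    krausDual K (Z * W) = krausDual K Z * X := by
  simp only [krausDual, Matrix.sum_mul, Matrix.mul_assoc, h]

theorem krausDual_mul_of_conjTranspose_intertwines {K : τ → Matrix κ ι ℂ} {W : Matrix κ κ ℂ}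
    {X : Matrix ι ι ℂ} (h : ∀ i, Wᴴ * K i = K i * Xᴴ) (Z : Matrix κ κ ℂ) :
    krausDual K (W * Z) = X * krausDual K Z := by
  simpa only [← conjTranspose_mul, ← conjTranspose_krausDual, conjTranspose_inj]
    using krausDual_mul_of_intertwines h Zᴴ

theorem krausDual_conjTranspose_mul_self_sub [DecidableEq ι] {K : τ → Matrix κ ι ℂ}
    (hK : ∑ i, (K i)ᴴ * K i = 1) (X : Matrix κ κ ℂ) :
    krausDual K (Xᴴ * X) - (krausDual K X)ᴴ * krausDual K X =
      ∑ i, (X * K i - K i * krausDual K X)ᴴ * (X * K i - K i * krausDual K X) := by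
  have hexpand (Z : Matrix ι ι ℂ) (i : τ) : (X * K i - K i * Z)ᴴ * (X * K i - K i * Z) =
      (K i)ᴴ * (Xᴴ * X) * K i - (K i)ᴴ * Xᴴ * K i * Z - Zᴴ * ((K i)ᴴ * X * K i) +
        Zᴴ * ((K i)ᴴ * K i) * Z := by
    simp only [conjTranspose_sub, conjTranspose_mul, Matrix.sub_mul, Matrix.mul_sub,
      Matrix.mul_assoc]
    abel
  have hsum (Z : Matrix ι ι ℂ) : ∑ i, (X * K i - K i * Z)ᴴ * (X * K i - K i * Z) =
      krausDual K (Xᴴ * X) - krausDual K Xᴴ * Z - Zᴴ * krausDual K X + Zᴴ * Z := by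
    simp only [hexpand, Finset.sum_add_distrib, Finset.sum_sub_distrib, ← Matrix.sum_mul,
      ← Matrix.mul_sum, hK, Matrix.mul_one, krausDual]
  rw [hsum, ← conjTranspose_krausDual]
  abel

/-- Equality in the Kadison–Schwarz inequality puts `X` in the multiplicative domain. -/
theorem mul_eq_mul_krausDual [DecidableEq ι] {K : τ → Matrix κ ι ℂ}
    (hK : ∑ i, (K i)ᴴ * K i = 1) {X : Matrix κ κ ℂ}
    (hX : krausDual K (Xᴴ * X) = (krausDual K X)ᴴ * krausDual K X) (i : τ) :
    X * K i = K i * krausDual K X := by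
  have hsum := krausDual_conjTranspose_mul_self_sub hK X
  rw [hX, sub_self] at hsum
  have htrace := congrArg trace hsum.symm
  rw [trace_sum, trace_zero, Finset.sum_eq_zero_iff_of_nonneg
    fun j _ => (posSemidef_conjTranspose_mul_self _).trace_nonneg] at htrace
  exact sub_eq_zero.1 (trace_conjTranspose_mul_self_eq_zero_iff.1 (htrace i (Finset.mem_univ i)))

end KrausOperators

section Marginals

variable [Fintype κ]

/-- The partial trace over the second tensor factor, `Tr₂`. -/
def partialTraceSnd (M : Matrix (ι × κ) (ι × κ) ℂ) : Matrix ι ι ℂ :=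
  ∑ b, M.submatrix (·, b) (·, b)

theorem posSemidef_partialTraceSnd {M : Matrix (ι × κ) (ι × κ) ℂ} (hM : M.PosSemidef) :
    (partialTraceSnd M).PosSemidef :=
  posSemidef_sum _ fun _ _ => hM.submatrix _

variable [Fintype ι] [DecidableEq κ]

theorem trace_partialTraceSnd_mul (M : Matrix (ι × κ) (ι × κ) ℂ) (X : Matrix ι ι ℂ) :
    (partialTraceSnd M * X).trace = (M * (X ⊗ₖ (1 : Matrix κ κ ℂ))).trace := by
  have hentry (a : ι) (b : κ) : (M * (X ⊗ₖ (1 : Matrix κ κ ℂ))) (a, b) (a, b) =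
      (M.submatrix (·, b) (·, b) * X) a a := by
    simp [mul_apply, Fintype.sum_prod_type, one_apply]
  simp only [partialTraceSnd, Matrix.sum_mul, trace_sum]
  simp only [trace, diag_apply, Fintype.sum_prod_type, hentry]
  exact Finset.sum_comm

variable [Fintype τ]

theorem trace_partialTraceSnd_krausMap_mul (K : τ → Matrix (ι × κ) ι ℂ) (ρ X : Matrix ι ι ℂ) :
    (partialTraceSnd (krausMap K ρ) * X).trace =
      (ρ * krausDual K (X ⊗ₖ (1 : Matrix κ κ ℂ))).trace := by
  rw [trace_partialTraceSnd_mul, trace_krausMap_mul]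

variable [DecidableEq ι] {K : τ → Matrix (ι × κ) ι ℂ}

theorem SeparatesStates.partialTraceSnd_krausMap {A : Ω → Matrix ι ι ℂ} (hA : SeparatesStates A)
    (hK : ∑ i, (K i)ᴴ * K i = 1)
    (hfix : ∀ x, krausDual K (A x ⊗ₖ (1 : Matrix κ κ ℂ)) = A x)
    {P : Matrix ι ι ℂ} (hP : P.PosSemidef) : partialTraceSnd (krausMap K P) = P := by
  refine hA.eq_of_posSemidef (posSemidef_partialTraceSnd (posSemidef_krausMap K hP)) hP ?_ ?_
  · simpa [krausDual_one hK] using trace_partialTraceSnd_krausMap_mul K P 1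
  · intro x
    rw [trace_partialTraceSnd_krausMap_mul, hfix]

theorem SeparatesStates.krausDual_kronecker_one {A : Ω → Matrix ι ι ℂ} (hA : SeparatesStates A)
    (hK : ∑ i, (K i)ᴴ * K i = 1)
    (hfix : ∀ x, krausDual K (A x ⊗ₖ (1 : Matrix κ κ ℂ)) = A x) (X : Matrix ι ι ℂ) :
    krausDual K (X ⊗ₖ (1 : Matrix κ κ ℂ)) = X :=
  ext_of_trace_posSemidef_mul fun P hP => by
    rw [← trace_partialTraceSnd_krausMap_mul, hA.partialTraceSnd_krausMap hK hfix hP]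

theorem kronecker_one_intertwines (hK : ∑ i, (K i)ᴴ * K i = 1)
    (hfix : ∀ X : Matrix ι ι ℂ, krausDual K (X ⊗ₖ (1 : Matrix κ κ ℂ)) = X)
    (X : Matrix ι ι ℂ) (i : τ) : (X ⊗ₖ (1 : Matrix κ κ ℂ)) * K i = K i * X := by
  have hdomain : krausDual K ((X ⊗ₖ (1 : Matrix κ κ ℂ))ᴴ * (X ⊗ₖ 1)) =
      (krausDual K (X ⊗ₖ 1))ᴴ * krausDual K (X ⊗ₖ 1) := by
    rw [conjTranspose_kronecker, conjTranspose_one, ← mul_kronecker_mul, Matrix.one_mul,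
      hfix, hfix]
  simpa only [hfix] using mul_eq_mul_krausDual hK hdomain i

theorem krausDual_one_kronecker_mem_range_scalar (hK : ∑ i, (K i)ᴴ * K i = 1)
    (hfix : ∀ X : Matrix ι ι ℂ, krausDual K (X ⊗ₖ (1 : Matrix κ κ ℂ)) = X) (Y : Matrix κ κ ℂ) :
    krausDual K ((1 : Matrix ι ι ℂ) ⊗ₖ Y) ∈ Set.range (scalar ι) := by
  have hintertwines := kronecker_one_intertwines hK hfix
  have hconj (X : Matrix ι ι ℂ) (i : τ) : (X ⊗ₖ (1 : Matrix κ κ ℂ))ᴴ * K i = K i * Xᴴ := by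
    rw [conjTranspose_kronecker, conjTranspose_one, hintertwines]
  refine mem_range_scalar_iff_commute_single'.2 fun j k => ?_
  generalize single j k (1 : ℂ) = E
  calc E * krausDual K (1 ⊗ₖ Y)
      = krausDual K ((E ⊗ₖ 1) * (1 ⊗ₖ Y)) :=
        (krausDual_mul_of_conjTranspose_intertwines (hconj E) _).symm
    _ = krausDual K ((1 ⊗ₖ Y) * (E ⊗ₖ 1)) := by
        simp only [← mul_kronecker_mul, Matrix.one_mul, Matrix.mul_one]
    _ = krausDual K (1 ⊗ₖ Y) * E := krausDual_mul_of_intertwines (hintertwines E) _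

end Marginals

theorem info_complete_not_broadcastable_general [Fintype ι] [Fintype κ] [Fintype τ]
    [DecidableEq ι] [DecidableEq κ] [Nontrivial ι]
    {A : Ω → Matrix ι ι ℂ} (hA : SeparatesStates A) (B : Ω → Matrix κ κ ℂ) :
    ¬ ∃ K : τ → Matrix (ι × κ) ι ℂ,
      (∑ i, (K i)ᴴ * K i = 1) ∧
      ∀ x,
        krausDual K (A x ⊗ₖ (1 : Matrix κ κ ℂ)) = A x ∧
        krausDual K ((1 : Matrix ι ι ℂ) ⊗ₖ B x) = A x := by
  rintro ⟨K, hK, hbroadcast⟩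
  obtain ⟨x, hx⟩ := hA.exists_notMem_range_scalar
  have hfix := hA.krausDual_kronecker_one hK fun y => (hbroadcast y).1
  have hscalar := krausDual_one_kronecker_mem_range_scalar hK hfix (B x)
  rw [(hbroadcast x).2] at hscalar
  exact hx hscalar

end

/-- An informationally complete observable on ℂ^n (n ≥ 2) is not
broadcastable. -/
theorem info_complete_not_broadcastable {n : ℕ} (hn : 2 ≤ n)
    {ΩA : Type} [Fintype ΩA] (A : ΩA → Mat n)
    (hApos : ∀ x, (A x).PosSemidef) (hAsum : ∑ x, A x = 1)
    (hIC : InfoComplete A) :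
    ¬ ∃ (m : ℕ) (K : Fin m → Matrix (Fin n × Fin n) (Fin n) ℂ),
      (∑ i, (K i)ᴴ * K i = 1) ∧
      ∀ x,
        (∑ i, (K i)ᴴ * (A x ⊗ₖ (1 : Mat n)) * K i = A x) ∧
        (∑ i, (K i)ᴴ * ((1 : Mat n) ⊗ₖ A x) * K i = A x) := by
  have : Nontrivial (Fin n) := Fin.nontrivial_iff_two_le.2 hn
  rintro ⟨_, K, h⟩
  exact info_complete_not_broadcastable_general hIC.separatesStates A ⟨K, h⟩
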